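/- Let H and K be complex separable Hilbert spaces and let Φ: T(H) → T(K) be a strongly entanglement breaking quantum channel. Then there exist a Hilbert space E, an isometry U: H → E, and a weak*-weak* continuous positive linear map Ψ: B(K) → B(E) whose range is commutative under operator multiplication, such that Φ(X) = Ψ_*(U X U*) for all X ∈ T(H), where Ψ_*: T(E) → T(K) is the predual map of Ψ, characterized by Tr(Ψ(Y) Z) = Tr(Y Ψ_*(Z)) for all Z ∈ T(E), Y ∈ B(K). -/

import Mathlib

noncomputable section

open scoped ComplexInnerProductSpace
open ContinuousLinearMap Filter Topology

/-- The rank-one operator `u v*`, i.e. `x ↦ ⟪v, x⟫ • u`. -/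
def rankOne {H K : Type*} [NormedAddCommGroup H] [InnerProductSpace ℂ H]
    [NormedAddCommGroup K] [InnerProductSpace ℂ K] (u : K) (v : H) : H →L[ℂ] K :=
  (ContinuousLinearMap.toSpanSingleton ℂ u).comp (innerSL ℂ v)

/-- An operator is trace class iff the sums `∑ |⟪f i, T (e i)⟫|` over finite orthonormal
families are uniformly bounded (the supremum being the trace norm). -/
def IsTraceClass {H K : Type*} [NormedAddCommGroup H] [InnerProductSpace ℂ H]
    [NormedAddCommGroup K] [InnerProductSpace ℂ K] (T : H →L[ℂ] K) : Prop :=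
  ∃ C : ℝ, ∀ (n : ℕ) (e : Fin n → H) (f : Fin n → K),
    Orthonormal ℂ e → Orthonormal ℂ f → (∑ i, ‖⟪f i, T (e i)⟫‖) ≤ C

/-- The trace norm of an operator. -/
def traceNorm {H K : Type*} [NormedAddCommGroup H] [InnerProductSpace ℂ H]
    [NormedAddCommGroup K] [InnerProductSpace ℂ K] (T : H →L[ℂ] K) : ℝ :=
  sSup { r : ℝ | ∃ (n : ℕ) (e : Fin n → H) (f : Fin n → K),
    Orthonormal ℂ e ∧ Orthonormal ℂ f ∧ r = ∑ i, ‖⟪f i, T (e i)⟫‖ }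

/-- A fixed Hilbert basis of a Hilbert space. -/
def stdONB (H : Type*) [NormedAddCommGroup H] [InnerProductSpace ℂ H] [CompleteSpace H] :
    HilbertBasis (exists_hilbertBasis ℂ H).choose ℂ H :=
  (exists_hilbertBasis ℂ H).choose_spec.choose

/-- The trace of a (trace-class) operator. -/
def Tr {H : Type*} [NormedAddCommGroup H] [InnerProductSpace ℂ H] [CompleteSpace H]
    (T : H →L[ℂ] H) : ℂ :=
  ∑' i, ⟪stdONB H i, T (stdONB H i)⟫

/-- Convergence of a series of operators in trace norm. -/
def HasSumTN {H K : Type*} [NormedAddCommGroup H] [InnerProductSpace ℂ H]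
    [NormedAddCommGroup K] [InnerProductSpace ℂ K] {ι : Type*}
    (f : ι → (H →L[ℂ] K)) (T : H →L[ℂ] K) : Prop :=
  Filter.Tendsto (fun s : Finset ι => traceNorm (T - ∑ k ∈ s, f k)) Filter.atTop (nhds 0)

/-- A state: a positive trace-class operator with trace one. -/
def IsState {H : Type*} [NormedAddCommGroup H] [InnerProductSpace ℂ H] [CompleteSpace H]
    (ρ : H →L[ℂ] H) : Prop :=
  IsTraceClass ρ ∧ ρ.IsPositive ∧ Tr ρ = 1

/-- Positivity of a finite matrix of operators, viewed as a block operator. -/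
def MatPos {H : Type*} [NormedAddCommGroup H] [InnerProductSpace ℂ H] {n : ℕ}
    (M : Fin n → Fin n → (H →L[ℂ] H)) : Prop :=
  ∀ x : Fin n → H,
    0 ≤ (∑ i, ∑ j, ⟪x i, M i j (x j)⟫).re ∧ (∑ i, ∑ j, ⟪x i, M i j (x j)⟫).im = 0

/-- Complete positivity of a linear map on trace-class operators. -/
def IsCompletelyPositive {H K : Type*} [NormedAddCommGroup H] [InnerProductSpace ℂ H]
    [NormedAddCommGroup K] [InnerProductSpace ℂ K]
    (Φ : (H →L[ℂ] H) →ₗ[ℂ] (K →L[ℂ] K)) : Prop :=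
  ∀ (n : ℕ) (M : Fin n → Fin n → (H →L[ℂ] H)),
    (∀ i j, IsTraceClass (M i j)) → MatPos M → MatPos fun i j => Φ (M i j)

/-- A quantum channel: a completely positive trace-preserving linear map on
trace-class operators. -/
structure IsChannel {H K : Type*} [NormedAddCommGroup H] [InnerProductSpace ℂ H]
    [CompleteSpace H] [NormedAddCommGroup K] [InnerProductSpace ℂ K] [CompleteSpace K]
    (Φ : (H →L[ℂ] H) →ₗ[ℂ] (K →L[ℂ] K)) : Prop where
  maps_traceClass : ∀ X : H →L[ℂ] H, IsTraceClass X → IsTraceClass (Φ X)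
  completelyPositive : IsCompletelyPositive Φ
  tracePreserving : ∀ X : H →L[ℂ] H, IsTraceClass X → Tr (Φ X) = Tr X

/-- Strongly entanglement breaking channel: admits a Holevo (measure-and-prepare) form
`Φ(X) = ∑ₖ Tr(Fₖ X) Rₖ` with states `Rₖ` and positive `Fₖ` with `∑ₖ Fₖ = I` (SOT). -/
def IsSEB {H K : Type*} [NormedAddCommGroup H] [InnerProductSpace ℂ H] [CompleteSpace H]
    [NormedAddCommGroup K] [InnerProductSpace ℂ K] [CompleteSpace K]
    (Φ : (H →L[ℂ] H) →ₗ[ℂ] (K →L[ℂ] K)) : Prop :=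
  ∃ (R : ℕ → (K →L[ℂ] K)) (F : ℕ → (H →L[ℂ] H)),
    (∀ k, IsState (R k)) ∧ (∀ k, (F k).IsPositive) ∧
    (∀ x : H, HasSum (fun k => F k x) x) ∧
    ∀ X : H →L[ℂ] H, IsTraceClass X → HasSumTN (fun k => Tr (F k * X) • R k) (Φ X)

/-- The weak* topology on `B(H)`, induced by the pairing with trace-class operators. -/
def weakStarTopology (H : Type*) [NormedAddCommGroup H] [InnerProductSpace ℂ H]
    [CompleteSpace H] : TopologicalSpace (H →L[ℂ] H) :=
  TopologicalSpace.induced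
    (fun Y => fun X : { X : H →L[ℂ] H // IsTraceClass X } => Tr ((X : H →L[ℂ] H) * Y))
    inferInstance


/-- `Φ` dilates, via an isometry `U : H → E`, to the predual `Ψ_*` of a weak*-weak*
continuous positive map `Ψ : B(K) → B(E)` with commutative range:
`Φ(X) = Ψ_*(U X U*)`. -/
def IsDilationOf (H K E : Type*)
    [NormedAddCommGroup H] [InnerProductSpace ℂ H] [CompleteSpace H]
    [NormedAddCommGroup K] [InnerProductSpace ℂ K] [CompleteSpace K]
    [NormedAddCommGroup E] [InnerProductSpace ℂ E] [CompleteSpace E]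
    (Φ : (H →L[ℂ] H) →ₗ[ℂ] (K →L[ℂ] K)) : Prop :=
  ∃ (U : H →L[ℂ] E) (Ψ : (K →L[ℂ] K) →ₗ[ℂ] (E →L[ℂ] E))
      (Ψst : (E →L[ℂ] E) →ₗ[ℂ] (K →L[ℂ] K)),
    (∀ x : H, ‖U x‖ = ‖x‖) ∧
    (∀ Y : K →L[ℂ] K, Y.IsPositive → (Ψ Y).IsPositive) ∧
    (@Continuous _ _ (weakStarTopology K) (weakStarTopology E)
      (Ψ : (K →L[ℂ] K) → (E →L[ℂ] E))) ∧
    (∀ Y₁ Y₂ : K →L[ℂ] K, Ψ Y₁ * Ψ Y₂ = Ψ Y₂ * Ψ Y₁) ∧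
    (∀ Z : E →L[ℂ] E, IsTraceClass Z → IsTraceClass (Ψst Z)) ∧
    (∀ (Z : E →L[ℂ] E) (Y : K →L[ℂ] K), IsTraceClass Z →
      Tr (Ψ Y * Z) = Tr (Y * Ψst Z)) ∧
    (∀ X : H →L[ℂ] H, IsTraceClass X →
      Φ X = Ψst (U ∘L X ∘L ContinuousLinearMap.adjoint U))

section Helpers

universe u v w

/-- A nuclear representation of an operator. -/
def NRep {H : Type u} {K : Type v} [NormedAddCommGroup H] [InnerProductSpace ℂ H]
    [NormedAddCommGroup K] [InnerProductSpace ℂ K] (T : H →L[ℂ] K) {ι : Type w}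
    (a : ι → K) (c : ι → H) : Prop :=
  Summable (fun i => ‖a i‖ * ‖c i‖) ∧ ∀ x, HasSum (fun i => ⟪c i, x⟫ • a i) (T x)

lemma bessel_cs {H : Type u} {K : Type v} [NormedAddCommGroup H] [InnerProductSpace ℂ H]
    [NormedAddCommGroup K] [InnerProductSpace ℂ K] {ι : Type w} {e : ι → H} {f : ι → K}
    (he : Orthonormal ℂ e) (hf : Orthonormal ℂ f) (x : K) (y : H) (s : Finset ι) :
    ∑ i ∈ s, ‖⟪y, e i⟫‖ * ‖⟪f i, x⟫‖ ≤ ‖x‖ * ‖y‖ := by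
  have h1 := Real.sum_mul_le_sqrt_mul_sqrt s (fun i => ‖⟪y, e i⟫‖) (fun i => ‖⟪f i, x⟫‖)
  have h2 : ∑ i ∈ s, ‖⟪y, e i⟫‖ ^ 2 ≤ ‖y‖ ^ 2 := by
    have := he.sum_inner_products_le y (s := s)
    simpa only [norm_inner_symm] using this
  have h3 : ∑ i ∈ s, ‖⟪f i, x⟫‖ ^ 2 ≤ ‖x‖ ^ 2 := hf.sum_inner_products_le x (s := s)
  have h4 := Real.sqrt_le_sqrt h2
  have h5 := Real.sqrt_le_sqrt h3
  rw [Real.sqrt_sq (norm_nonneg _)] at h4 h5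
  calc _ ≤ _ := h1
    _ ≤ ‖y‖ * ‖x‖ := by gcongr
    _ = _ := mul_comm _ _

lemma NRep.isTraceClass {H : Type u} {K : Type v} [NormedAddCommGroup H] [InnerProductSpace ℂ H]
    [NormedAddCommGroup K] [InnerProductSpace ℂ K] {T : H →L[ℂ] K} {ι : Type w}
    {a : ι → K} {c : ι → H} (h : NRep T a c) : IsTraceClass T := by
  refine ⟨∑' i, ‖a i‖ * ‖c i‖, fun n e f he hf => ?_⟩
  have h1 : ∀ i, HasSum (fun j => ⟪c j, e i⟫ * ⟪f i, a j⟫) ⟪f i, T (e i)⟫ := by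
    intro i
    have := (h.2 (e i)).mapL (innerSL ℂ (f i))
    simpa [inner_smul_right] using this
  have hb : ∀ (s : Finset (Fin n)) j,
      ∑ i ∈ s, ‖⟪c j, e i⟫ * ⟪f i, a j⟫‖ ≤ ‖a j‖ * ‖c j‖ := by
    intro s j
    simpa only [norm_mul] using bessel_cs he hf (a j) (c j) s
  have hs : ∀ i, Summable (fun j => ‖⟪c j, e i⟫ * ⟪f i, a j⟫‖) := fun i =>
    Summable.of_nonneg_of_le (fun _ => norm_nonneg _)
      (fun j => by simpa using hb {i} j) h.1
  calc ∑ i, ‖⟪f i, T (e i)⟫‖ ≤ ∑ i, ∑' j, ‖⟪c j, e i⟫ * ⟪f i, a j⟫‖ := by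
        refine Finset.sum_le_sum fun i _ => ?_
        rw [← (h1 i).tsum_eq]
        exact norm_tsum_le_tsum_norm (hs i)
    _ = ∑' j, ∑ i, ‖⟪c j, e i⟫ * ⟪f i, a j⟫‖ := by
        rw [Summable.tsum_finsetSum (fun i _ => hs i)]
    _ ≤ _ := Summable.tsum_le_tsum (fun j => hb _ j) (summable_sum fun i _ => hs i) h.1

lemma NRep.hasSum_trace {H : Type u} [NormedAddCommGroup H] [InnerProductSpace ℂ H]
    {T : H →L[ℂ] H} {ι : Type w}
    {a c : ι → H} (h : NRep T a c) {κ : Type v} (b : HilbertBasis κ ℂ H) :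
    HasSum (fun i => ⟪b i, T (b i)⟫) (∑' j, ⟪c j, a j⟫) := by
  have hb : ∀ (s : Finset κ) j,
      ∑ i ∈ s, ‖⟪c j, b i⟫ * ⟪b i, a j⟫‖ ≤ ‖a j‖ * ‖c j‖ := by
    intro s j
    simpa only [norm_mul] using bessel_cs b.orthonormal b.orthonormal (a j) (c j) s
  have hs1 : ∀ j, Summable (fun i => ‖⟪c j, b i⟫ * ⟪b i, a j⟫‖) := fun j =>
    summable_of_sum_le (fun _ => norm_nonneg _) (fun s => hb s j)
  have hs2 : Summable (fun p : ι × κ => ‖⟪c p.1, b p.2⟫ * ⟪b p.2, a p.1⟫‖) := by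
    rw [summable_prod_of_nonneg (fun _ => norm_nonneg _)]
    refine ⟨hs1, Summable.of_nonneg_of_le (fun _ => tsum_nonneg fun _ => norm_nonneg _)
      (fun j => ?_) h.1⟩
    exact Real.tsum_le_of_sum_le (fun _ => norm_nonneg _) (fun s => hb s j)
  have hs3 := hs2.of_norm
  have e1 := (hs3.hasSum.prod_fiberwise (fun j => b.hasSum_inner_mul_inner (c j) (a j))).tsum_eq
  rw [e1]
  have hs4 := (Equiv.prodComm κ ι).hasSum_iff.mpr hs3.hasSum
  refine hs4.prod_fiberwise fun i => ?_
  have := (h.2 (b i)).mapL (innerSL ℂ (b i))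
  simpa [inner_smul_right] using this

lemma NRep.tr {H : Type u} [NormedAddCommGroup H] [InnerProductSpace ℂ H] [CompleteSpace H]
    {T : H →L[ℂ] H} {ι : Type w}
    {a c : ι → H} (h : NRep T a c) : Tr T = ∑' j, ⟪c j, a j⟫ :=
  (h.hasSum_trace (stdONB H)).tsum_eq

lemma NRep.hasSum_tr {H : Type u} [NormedAddCommGroup H] [InnerProductSpace ℂ H] [CompleteSpace H]
    {T : H →L[ℂ] H} {ι : Type w}
    {a c : ι → H} (h : NRep T a c) {κ : Type v} (b : HilbertBasis κ ℂ H) :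
    HasSum (fun i => ⟪b i, T (b i)⟫) (Tr T) := by
  rw [h.tr]; exact h.hasSum_trace b

lemma NRep.comp_left {H : Type u} {K : Type v} [NormedAddCommGroup H] [InnerProductSpace ℂ H]
    [NormedAddCommGroup K] [InnerProductSpace ℂ K] {L : Type*} [NormedAddCommGroup L]
    [InnerProductSpace ℂ L] {T : H →L[ℂ] K} {ι : Type w}
    {a : ι → K} {c : ι → H} (h : NRep T a c) (Y : K →L[ℂ] L) :
    NRep (Y ∘L T) (fun i => Y (a i)) c := by
  refine ⟨Summable.of_nonneg_of_le (fun _ => by positivity) (fun i => ?_) (h.1.mul_left ‖Y‖),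
    fun x => ?_⟩
  · rw [← mul_assoc]; gcongr; exact Y.le_opNorm _
  · simpa using (h.2 x).mapL Y

lemma NRep.comp_right {H : Type u} {K : Type v} [NormedAddCommGroup H] [InnerProductSpace ℂ H]
    [CompleteSpace H]
    [NormedAddCommGroup K] [InnerProductSpace ℂ K] {L : Type*} [NormedAddCommGroup L]
    [InnerProductSpace ℂ L] [CompleteSpace L] {T : H →L[ℂ] K} {ι : Type w}
    {a : ι → K} {c : ι → H} (h : NRep T a c) (Y : L →L[ℂ] H) :
    NRep (T ∘L Y) a (fun i => ContinuousLinearMap.adjoint Y (c i)) := by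
  refine ⟨Summable.of_nonneg_of_le (fun _ => by positivity) (fun i => ?_)
    (h.1.mul_left ‖ContinuousLinearMap.adjoint Y‖), fun x => ?_⟩
  · have := (ContinuousLinearMap.adjoint Y).le_opNorm (c i)
    calc _ ≤ ‖a i‖ * (‖ContinuousLinearMap.adjoint Y‖ * ‖c i‖) := by gcongr
      _ = _ := by ring
  · simpa [ContinuousLinearMap.adjoint_inner_left] using h.2 (Y x)

lemma NRep.tr_comm {H : Type u} [NormedAddCommGroup H] [InnerProductSpace ℂ H] [CompleteSpace H]
    {T : H →L[ℂ] H} {ι : Type w}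
    {a c : ι → H} (h : NRep T a c) (Y : H →L[ℂ] H) : Tr (Y * T) = Tr (T * Y) := by
  have h1 := (h.comp_left Y).tr
  have h2 := (h.comp_right Y).tr
  change Tr (Y ∘L T) = Tr (T ∘L Y)
  rw [h1, h2]
  simp [ContinuousLinearMap.adjoint_inner_left]

lemma NRep.smul {H : Type u} {K : Type v} [NormedAddCommGroup H] [InnerProductSpace ℂ H]
    [NormedAddCommGroup K] [InnerProductSpace ℂ K] {T : H →L[ℂ] K} {ι : Type w}
    {a : ι → K} {c : ι → H} (h : NRep T a c) (z : ℂ) :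
    NRep (z • T) (fun i => z • a i) c := by
  refine ⟨?_, fun x => ?_⟩
  · simpa [norm_smul, mul_assoc] using h.1.mul_left ‖z‖
  · simpa [smul_comm z] using (h.2 x).const_smul z

lemma NRep.add {H : Type u} {K : Type v} [NormedAddCommGroup H] [InnerProductSpace ℂ H]
    [NormedAddCommGroup K] [InnerProductSpace ℂ K] {T T' : H →L[ℂ] K} {ι ι' : Type w}
    {a : ι → K} {c : ι → H} (h : NRep T a c) {a' : ι' → K} {c' : ι' → H} (h' : NRep T' a' c') :
    NRep (T + T') (Sum.elim a a') (Sum.elim c c') := by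
  refine ⟨?_, fun x => ?_⟩
  · exact (HasSum.sum (f := fun i => ‖Sum.elim a a' i‖ * ‖Sum.elim c c' i‖)
      h.1.hasSum h'.1.hasSum).summable
  · exact HasSum.sum (f := fun i => ⟪Sum.elim c c' i, x⟫ • Sum.elim a a' i) (h.2 x) (h'.2 x)

lemma exists_sqrt {H : Type u} [NormedAddCommGroup H] [InnerProductSpace ℂ H] [CompleteSpace H]
    {T : H →L[ℂ] H} (hT : T.IsPositive) :
    ∃ S : H →L[ℂ] H, ContinuousLinearMap.adjoint S = S ∧ ∀ x, S (S x) = T x := by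
  have h0 : 0 ≤ T := (ContinuousLinearMap.nonneg_iff_isPositive T).mpr hT
  have h1 : 0 ≤ CFC.sqrt T := CFC.sqrt_nonneg T
  have h2 : (CFC.sqrt T).IsPositive := (ContinuousLinearMap.nonneg_iff_isPositive _).mp h1
  have h3 : CFC.sqrt T * CFC.sqrt T = T := CFC.sqrt_mul_sqrt_self T h0
  generalize CFC.sqrt T = S at h2 h3
  exact ⟨S, h2.isSelfAdjoint, fun x => DFunLike.congr_fun h3 x⟩

lemma nrep_sq {H : Type u} [NormedAddCommGroup H] [InnerProductSpace ℂ H] [CompleteSpace H]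
    {T S : H →L[ℂ] H} (hS : ContinuousLinearMap.adjoint S = S) (hST : ∀ x, S (S x) = T x)
    {κ : Type w} {c : κ → H} (hs : Summable fun j => ‖S (c j)‖ ^ 2)
    (hc : ∀ x, HasSum (fun j => ⟪c j, S x⟫ • c j) (S x)) :
    NRep T (fun j => S (c j)) (fun j => S (c j)) := by
  refine ⟨by simpa only [sq] using hs, fun x => ?_⟩
  have := (hc x).mapL S
  rw [hST] at this
  convert this using 2 with j
  rw [map_smul, ← ContinuousLinearMap.adjoint_inner_left, hS]

lemma norm_sq_sqrt {H : Type u} [NormedAddCommGroup H] [InnerProductSpace ℂ H] [CompleteSpace H]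
    {T S : H →L[ℂ] H} (hS : ContinuousLinearMap.adjoint S = S) (hST : ∀ x, S (S x) = T x)
    (x : H) : ⟪x, T x⟫ = ((‖S x‖ ^ 2 : ℝ) : ℂ) := by
  rw [← hST, ← ContinuousLinearMap.adjoint_inner_left, hS, inner_self_eq_norm_sq_to_K]
  norm_cast

lemma IsTraceClass.summable {H : Type u} [NormedAddCommGroup H] [InnerProductSpace ℂ H]
    {T : H →L[ℂ] H} (h : IsTraceClass T) {κ : Type w} {e : κ → H} (he : Orthonormal ℂ e) :
    Summable fun i => ‖⟪e i, T (e i)⟫‖ := by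
  obtain ⟨C, hC⟩ := h
  refine summable_of_sum_le (c := C) (fun _ => norm_nonneg _) fun s => ?_
  have ho : Orthonormal ℂ (fun i : Fin s.card => e (s.equivFin.symm i)) :=
    he.comp _ (Subtype.val_injective.comp s.equivFin.symm.injective)
  have := hC s.card _ _ ho ho
  refine le_of_eq_of_le ?_ this
  rw [← Finset.sum_coe_sort s]
  exact (Equiv.sum_comp s.equivFin.symm (fun i : s => ‖⟪e i, T (e i)⟫‖)).symm

lemma IsTraceClass.add {H : Type u} {K : Type v} [NormedAddCommGroup H] [InnerProductSpace ℂ H]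
    [NormedAddCommGroup K] [InnerProductSpace ℂ K]
    {T T' : H →L[ℂ] K} (h : IsTraceClass T) (h' : IsTraceClass T') : IsTraceClass (T + T') := by
  obtain ⟨C, hC⟩ := h
  obtain ⟨C', hC'⟩ := h'
  refine ⟨C + C', fun n e f he hf => ?_⟩
  refine le_trans ?_ (add_le_add (hC n e f he hf) (hC' n e f he hf))
  rw [← Finset.sum_add_distrib]
  refine Finset.sum_le_sum fun i _ => ?_
  simp only [add_apply, inner_add_right]
  exact norm_add_le _ _

lemma IsTraceClass.smul {H : Type u} {K : Type v} [NormedAddCommGroup H] [InnerProductSpace ℂ H]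
    [NormedAddCommGroup K] [InnerProductSpace ℂ K]
    {T : H →L[ℂ] K} (h : IsTraceClass T) (z : ℂ) : IsTraceClass (z • T) := by
  obtain ⟨C, hC⟩ := h
  refine ⟨‖z‖ * C, fun n e f he hf => ?_⟩
  refine le_trans (le_of_eq ?_) (mul_le_mul_of_nonneg_left (hC n e f he hf) (norm_nonneg z))
  simp [Finset.mul_sum, inner_smul_right]

lemma IsTraceClass.adjoint {H : Type u} [NormedAddCommGroup H] [InnerProductSpace ℂ H]
    [CompleteSpace H]
    {T : H →L[ℂ] H} (h : IsTraceClass T) : IsTraceClass (ContinuousLinearMap.adjoint T) := by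
  obtain ⟨C, hC⟩ := h
  refine ⟨C, fun n e f he hf => ?_⟩
  refine le_trans (le_of_eq ?_) (hC n f e hf he)
  refine Finset.sum_congr rfl fun i _ => ?_
  rw [ContinuousLinearMap.adjoint_inner_right, norm_inner_symm]

/-- If `T` is trace class and `P` is positive with `T P = P P`, then `P` is nuclear. -/
lemma IsTraceClass.nrep_part {H : Type u} [NormedAddCommGroup H] [InnerProductSpace ℂ H]
    [CompleteSpace H] {T P : H →L[ℂ] H} (h : IsTraceClass T) (hP : P.IsPositive)
    (hTP : ∀ x, T (P x) = P (P x)) :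
    ∃ (ι : Type u) (a c : ι → H), NRep P a c := by
  obtain ⟨S, hS, hSP⟩ := exists_sqrt hP
  have hPa : ContinuousLinearMap.adjoint P = P := hP.isSelfAdjoint
  let M : Submodule ℂ H := (LinearMap.range (P : H →ₗ[ℂ] H)).topologicalClosure
  have : CompleteSpace M := (Submodule.isClosed_topologicalClosure _).completeSpace_coe
  obtain ⟨w, b, hb⟩ := exists_hilbertBasis ℂ M
  have hMT : ∀ x ∈ M, T x = P x := by
    intro x hx
    have hcl : IsClosed {x : H | T x = P x} := isClosed_eq T.continuous P.continuous
    have : (closure (Set.range P)) ⊆ {x : H | T x = P x} := by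
      refine closure_minimal ?_ hcl
      rintro _ ⟨y, rfl⟩
      exact hTP y
    exact this hx
  have hSM : ∀ x, S x ∈ M := by
    intro x
    have hperp : ∀ y ∈ Mᗮ, ⟪y, S x⟫ = 0 := by
      intro y hy
      have hPy : P y = 0 := by
        have h1 : ⟪P (P y), y⟫ = 0 :=
          hy _ (Submodule.le_topologicalClosure _ ⟨P y, rfl⟩)
        rw [← hPa, ContinuousLinearMap.adjoint_inner_left, hPa] at h1
        simpa using h1
      have hSy : S y = 0 := by
        have := norm_sq_sqrt hS hSP y
        rw [hPy, inner_zero_right] at this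
        have h2 : ‖S y‖ ^ 2 = 0 := by exact_mod_cast this.symm
        simpa using h2
      rw [← ContinuousLinearMap.adjoint_inner_left, hS, hSy, inner_zero_left]
    have : S x ∈ Mᗮᗮ := fun y hy => hperp y hy
    rwa [Submodule.orthogonal_orthogonal] at this
  have hon : Orthonormal ℂ (fun i => (b i : H)) := by
    have := b.orthonormal.comp_linearIsometry M.subtypeₗᵢ
    exact this
  refine ⟨w, _, _, nrep_sq hS hSP (c := fun i => (b i : H)) ?_ ?_⟩
  · refine (h.summable hon).congr fun i => ?_
    rw [hMT _ (b i).2, norm_sq_sqrt hS hSP, Complex.norm_real, Real.norm_of_nonneg (by positivity)]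
  · intro x
    have := (b.hasSum_repr ⟨S x, hSM x⟩).mapL M.subtypeL
    simpa [b.repr_apply_apply] using this

lemma IsTraceClass.nrep_sa {H : Type u} [NormedAddCommGroup H] [InnerProductSpace ℂ H]
    [CompleteSpace H] {T : H →L[ℂ] H} (h : IsTraceClass T) (hT : IsSelfAdjoint T) :
    ∃ (ι : Type u) (a c : ι → H), NRep T a c := by
  have hd := CFC.posPart_sub_negPart T hT
  have hm : T⁺ * T⁻ = 0 := CFC.posPart_mul_negPart T
  have hm' : T⁻ * T⁺ = 0 := CFC.negPart_mul_posPart T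
  have hp : (T⁺).IsPositive :=
    (ContinuousLinearMap.nonneg_iff_isPositive _).mp (CFC.posPart_nonneg T)
  have hn : (T⁻).IsPositive :=
    (ContinuousLinearMap.nonneg_iff_isPositive _).mp (CFC.negPart_nonneg T)
  generalize T⁺ = P at hd hm hm' hp
  generalize T⁻ = N at hd hm hm' hn
  obtain ⟨ι, a, c, h1⟩ := h.nrep_part hp (fun x => by
    have : T * P = P * P := by
      rw [← hd, sub_mul, hm', sub_zero]
    exact DFunLike.congr_fun this x)
  obtain ⟨ι', a', c', h2⟩ := (h.smul (-1)).nrep_part hn (fun x => by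
    have : ((-1 : ℂ) • T) * N = N * N := by
      rw [← hd, neg_one_smul, neg_mul, sub_mul, hm, zero_sub, neg_neg]
    exact DFunLike.congr_fun this x)
  have := h1.add (h2.smul (-1))
  rw [neg_one_smul, ← sub_eq_add_neg, hd] at this
  exact ⟨_, _, _, this⟩

lemma IsTraceClass.nrep {H : Type u} [NormedAddCommGroup H] [InnerProductSpace ℂ H]
    [CompleteSpace H] {T : H →L[ℂ] H} (h : IsTraceClass T) :
    ∃ (ι : Type u) (a c : ι → H), NRep T a c := by
  have hre := (h.add h.adjoint).smul (1/2)
  have him := (h.add (h.adjoint.smul (-1))).smul (-Complex.I/2)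
  have sre : IsSelfAdjoint ((1/2 : ℂ) • (T + ContinuousLinearMap.adjoint T)) := by
    rw [ContinuousLinearMap.isSelfAdjoint_iff']
    simp only [map_smulₛₗ, map_add, ContinuousLinearMap.adjoint_adjoint, map_div₀,
      map_one, map_ofNat]
    module
  have sim : IsSelfAdjoint
      ((-Complex.I/2 : ℂ) • (T + (-1 : ℂ) • ContinuousLinearMap.adjoint T)) := by
    rw [ContinuousLinearMap.isSelfAdjoint_iff']
    simp only [map_smulₛₗ, map_add, ContinuousLinearMap.adjoint_adjoint, map_div₀, map_neg,
      Complex.conj_I, map_one, map_ofNat]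
    module
  obtain ⟨ι, a, c, h1⟩ := hre.nrep_sa sre
  obtain ⟨ι', a', c', h2⟩ := him.nrep_sa sim
  have := h1.add (h2.smul Complex.I)
  have hd : (1/2 : ℂ) • (T + ContinuousLinearMap.adjoint T) +
      Complex.I • ((-Complex.I/2 : ℂ) • (T + (-1 : ℂ) • ContinuousLinearMap.adjoint T)) = T := by
    rw [smul_smul, show Complex.I * (-Complex.I/2) = 1/2 by
      rw [mul_div_assoc', mul_neg, Complex.I_mul_I, neg_neg]]
    module
  rw [hd] at this
  exact ⟨_, _, _, this⟩

lemma NRep.summable_inner {H : Type u} [NormedAddCommGroup H] [InnerProductSpace ℂ H]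
    {T : H →L[ℂ] H} {ι : Type w} {a c : ι → H} (h : NRep T a c) :
    Summable fun i => ⟪c i, a i⟫ := by
  refine Summable.of_norm_bounded h.1 fun i => ?_
  rw [mul_comm]
  exact norm_inner_le_norm _ _

lemma NRep.hasSum_inner {H : Type u} [NormedAddCommGroup H] [InnerProductSpace ℂ H]
    [CompleteSpace H]
    {T : H →L[ℂ] H} {ι : Type w} {a c : ι → H} (h : NRep T a c) :
    HasSum (fun i => ⟪c i, a i⟫) (Tr T) := by
  rw [h.tr]; exact h.summable_inner.hasSum

lemma NRep.norm_apply_le {H : Type u} {K : Type v} [NormedAddCommGroup H] [InnerProductSpace ℂ H]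
    [NormedAddCommGroup K] [InnerProductSpace ℂ K] {T : H →L[ℂ] K} {ι : Type w}
    {a : ι → K} {c : ι → H} (h : NRep T a c) : ‖T‖ ≤ ∑' i, ‖a i‖ * ‖c i‖ := by
  refine T.opNorm_le_bound (tsum_nonneg fun _ => by positivity) fun x => ?_
  rw [← (h.2 x).tsum_eq]
  refine tsum_of_norm_bounded (h.1.hasSum.mul_right ‖x‖) fun i => ?_
  rw [norm_smul, mul_comm, mul_assoc]
  gcongr
  exact norm_inner_le_norm _ _

/-- States have normalized nuclear representations. -/
lemma IsState.rep {K : Type v} [NormedAddCommGroup K] [InnerProductSpace ℂ K] [CompleteSpace K]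
    {R : K →L[ℂ] K} (hR : IsState R) :
    ∃ a : (exists_hilbertBasis ℂ K).choose → K, HasSum (fun i => ‖a i‖ ^ 2) 1 ∧ NRep R a a := by
  obtain ⟨-, hpos, htr⟩ := hR
  obtain ⟨S, hS, hSR⟩ := exists_sqrt hpos
  have h1 : HasSum (fun i => ‖S (stdONB K i)‖ ^ 2) 1 := by
    unfold Tr at htr
    have hs : Summable fun i => ⟪stdONB K i, R (stdONB K i)⟫ := by
      by_contra hn
      rw [tsum_eq_zero_of_not_summable hn] at htr
      exact zero_ne_one htr
    have h2 := hs.hasSum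
    rw [htr] at h2
    simp only [norm_sq_sqrt hS hSR] at h2
    exact (Complex.hasSum_iff _ _).mp h2 |>.1
  refine ⟨fun i => S (stdONB K i), h1, nrep_sq hS hSR h1.summable fun x => ?_⟩
  simpa [(stdONB K).repr_apply_apply] using (stdONB K).hasSum_repr (S x)

lemma sum_states {K : Type v} [NormedAddCommGroup K] [InnerProductSpace ℂ K] [CompleteSpace K]
    {P : Type*} {I : Type*} {R : P → (K →L[ℂ] K)} {a : P → I → K}
    (h1 : ∀ p, HasSum (fun i => ‖a p i‖ ^ 2) 1) (h2 : ∀ p, NRep (R p) (a p) (a p))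
    {z : P → ℂ} (hz : Summable fun p => ‖z p‖) :
    Summable (fun p => z p • R p) ∧
    NRep (∑' p, z p • R p) (fun q : P × I => z q.1 • a q.1 q.2) (fun q : P × I => a q.1 q.2) := by
  have hR : ∀ p, ‖R p‖ ≤ 1 := fun p => by
    have := (h2 p).norm_apply_le
    simpa only [← sq, (h1 p).tsum_eq] using this
  have hs : Summable (fun p => z p • R p) := by
    refine Summable.of_norm_bounded hz fun p => ?_
    rw [norm_smul]
    exact mul_le_of_le_one_right (norm_nonneg _) (hR p)
  have hn : Summable (fun q : P × I => ‖z q.1 • a q.1 q.2‖ * ‖a q.1 q.2‖) := by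
    have e : ∀ p, HasSum (fun i => ‖z p • a p i‖ * ‖a p i‖) ‖z p‖ := fun p => by
      simpa [norm_smul, sq, mul_assoc] using (h1 p).mul_left ‖z p‖
    rw [summable_prod_of_nonneg (fun _ => by positivity)]
    exact ⟨fun p => (e p).summable, hz.congr fun p => (e p).tsum_eq.symm⟩
  refine ⟨hs, hn, fun x => ?_⟩
  have hx : Summable (fun q : P × I => ⟪a q.1 q.2, x⟫ • (z q.1 • a q.1 q.2)) := by
    refine Summable.of_norm_bounded (hn.mul_right ‖x‖) fun q => ?_
    rw [norm_smul, mul_comm, mul_assoc]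
    gcongr
    exact norm_inner_le_norm _ _
  have hf : HasSum (fun p => z p • R p x) (∑' q : P × I, ⟪a q.1 q.2, x⟫ • (z q.1 • a q.1 q.2)) := by
    refine hx.hasSum.prod_fiberwise fun p => ?_
    simpa [smul_comm (z p)] using ((h2 p).2 x).const_smul (z p)
  have hf' : HasSum (fun p => z p • R p x) ((∑' p, z p • R p) x) := by
    simpa using hs.hasSum.mapL (ContinuousLinearMap.apply ℂ K x)
  rw [hf'.unique hf]
  exact hx.hasSum

lemma exists_lp_op {V : Type*} [NormedAddCommGroup V] [NormedSpace ℂ V] {ι : Type*}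
    (L : ι → V →ₗ[ℂ] ℂ) (C : ℝ) (hC : 0 ≤ C) (hs : ∀ x, Summable fun i => ‖L i x‖ ^ 2)
    (hb : ∀ x, ∑' i, ‖L i x‖ ^ 2 ≤ (C * ‖x‖) ^ 2) :
    ∃ U : V →L[ℂ] lp (fun _ : ι => ℂ) 2, ∀ x i, U x i = L i x := by
  have hm : ∀ x, Memℓp (fun i => L i x) 2 := fun x => by
    refine memℓp_gen ?_
    simpa using hs x
  let U0 : V →ₗ[ℂ] lp (fun _ : ι => ℂ) 2 :=
    { toFun := fun x => ⟨fun i => L i x, hm x⟩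
      map_add' := fun x y => by ext i; exact map_add (L i) x y
      map_smul' := fun c x => by ext i; simp }
  refine ⟨U0.mkContinuous C fun x => ?_, fun x i => rfl⟩
  have h1 := lp.norm_rpow_eq_tsum (p := 2) (by norm_num) (U0 x)
  have h2 : ‖U0 x‖ ^ 2 = ∑' i, ‖L i x‖ ^ 2 := by
    simp only [ENNReal.toReal_ofNat, Real.rpow_ofNat] at h1
    exact h1
  exact le_of_sq_le_sq (h2.trans_le (hb x)) (by positivity)

lemma lp_norm_sq {ι : Type*} (x : lp (fun _ : ι => ℂ) 2) :
    HasSum (fun i => ‖x i‖ ^ 2) (‖x‖ ^ 2) := by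
  have h1 := lp.hasSum_norm (p := 2) (by norm_num) x
  simpa using h1

/-- The standard Hilbert basis of `ℓ²`. -/
def lpBasis (ι : Type*) : HilbertBasis ι ℂ (lp (fun _ : ι => ℂ) 2) :=
  HilbertBasis.ofRepr (LinearIsometryEquiv.refl ℂ _)

lemma lpBasis_inner {ι : Type*} (x : lp (fun _ : ι => ℂ) 2) (i : ι) :
    ⟪lpBasis ι i, x⟫ = x i := by
  rw [← HilbertBasis.repr_apply_apply]; rfl

lemma exists_diag {ι : Type*} (d : ι → ℂ) (C : ℝ) (hC : 0 ≤ C) (hd : ∀ i, ‖d i‖ ≤ C) :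
    ∃ D : lp (fun _ : ι => ℂ) 2 →L[ℂ] lp (fun _ : ι => ℂ) 2, ∀ x i, D x i = d i * x i := by
  let L : ι → lp (fun _ : ι => ℂ) 2 →ₗ[ℂ] ℂ := fun i =>
    { toFun := fun x => d i * x i
      map_add' := fun x y => by simp [mul_add]
      map_smul' := fun c x => by simp; ring }
  have hle : ∀ (x : lp (fun _ : ι => ℂ) 2) i, ‖L i x‖ ^ 2 ≤ C ^ 2 * ‖x i‖ ^ 2 := fun x i => by
    change ‖d i * x i‖ ^ 2 ≤ _
    rw [norm_mul, mul_pow]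
    gcongr
    exact hd i
  have hsum := fun x : lp (fun _ : ι => ℂ) 2 => (lp_norm_sq x).mul_left (C ^ 2)
  have hs : ∀ x, Summable fun i => ‖L i x‖ ^ 2 := fun x =>
    Summable.of_nonneg_of_le (fun _ => by positivity) (hle x) (hsum x).summable
  refine exists_lp_op L C hC hs fun x => ?_
  rw [mul_pow, ← (hsum x).tsum_eq]
  exact Summable.tsum_le_tsum (hle x) (hs x) (hsum x).summable

lemma exists_small_basis (H : Type u) [NormedAddCommGroup H] [InnerProductSpace ℂ H]
    [CompleteSpace H] [TopologicalSpace.SeparableSpace H] :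
    ∃ J : Type, Nonempty (HilbertBasis J ℂ H) := by
  obtain ⟨w, b, -⟩ := exists_hilbertBasis ℂ H
  obtain ⟨D, hDc, hD⟩ := TopologicalSpace.exists_countable_dense H
  have hcount : (Set.univ : Set w).Countable := by
    have hsub : (Set.univ : Set w) ⊆ ⋃ d ∈ D, {i | ⟪b i, d⟫ ≠ 0} := by
      intro i _
      by_contra hcon
      simp only [Set.mem_iUnion, Set.mem_ofPred_eq, not_exists, not_not] at hcon
      have hcl : IsClosed {x : H | ⟪b i, x⟫ = 0} :=
        isClosed_eq (by fun_prop) continuous_const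
      have hall : closure D ⊆ {x : H | ⟪b i, x⟫ = 0} := closure_minimal (fun d hd => hcon d hd) hcl
      have h0 : ⟪b i, b i⟫ = 0 := hall (hD (b i))
      have h1 := b.orthonormal.1 i
      rw [inner_self_eq_zero] at h0
      rw [h0] at h1
      simp at h1
    refine Set.Countable.mono hsub (hDc.biUnion fun d _ => ?_)
    have := (b.hasSum_repr d).summable
    have hs := (b.summable_inner_mul_inner d d).countable_support
    refine hs.mono fun i hi => ?_
    simp only [Function.mem_support]
    exact mul_ne_zero (fun h => hi (by rw [← inner_conj_symm, h, map_zero])) hi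
  have : Countable w := Set.countable_univ_iff.mp hcount
  obtain ⟨f, hf⟩ := exists_injective_nat w
  let e : w ≃ Set.range f := Equiv.ofInjective f hf
  refine ⟨Set.range f, ⟨HilbertBasis.mk (v := fun j => b (e.symm j))
    (b.orthonormal.comp _ e.symm.injective) ?_⟩⟩
  have hr : Set.range (fun j => b (e.symm j)) = Set.range b := e.symm.surjective.range_comp b
  rw [hr, b.dense_span]

lemma norm_le_traceNorm {K : Type v} [NormedAddCommGroup K] [InnerProductSpace ℂ K]
    {T : K →L[ℂ] K} (hT : IsTraceClass T) : ‖T‖ ≤ traceNorm T := by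
  obtain ⟨C, hC⟩ := hT
  have hbdd : BddAbove { r : ℝ | ∃ (n : ℕ) (e : Fin n → K) (f : Fin n → K),
    Orthonormal ℂ e ∧ Orthonormal ℂ f ∧ r = ∑ i, ‖⟪f i, T (e i)⟫‖ } := by
    refine ⟨C, ?_⟩
    rintro _ ⟨n, e, f, he, hf, rfl⟩
    exact hC n e f he hf
  have h0 : 0 ≤ traceNorm T := le_csSup hbdd
    ⟨0, Fin.elim0, Fin.elim0, by simp, by simp, by simp⟩
  have hunit : ∀ x y : K, ‖x‖ = 1 → ‖y‖ = 1 → ‖⟪y, T x⟫‖ ≤ traceNorm T := by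
    intro x y hx hy
    refine le_csSup hbdd ⟨1, fun _ => x, fun _ => y, ?_, ?_, by simp⟩
    · refine ⟨fun _ => hx, fun i j hij => (hij (Subsingleton.elim i j)).elim⟩
    · refine ⟨fun _ => hy, fun i j hij => (hij (Subsingleton.elim i j)).elim⟩
  refine T.opNorm_le_of_unit_norm h0 fun x hx => ?_
  by_cases hTx : T x = 0
  · simpa [hTx] using h0
  have hne : ‖T x‖ ≠ 0 := norm_ne_zero_iff.mpr hTx
  have := hunit x (((‖T x‖⁻¹ : ℝ) : ℂ) • T x) hx (by
    rw [norm_smul, Complex.norm_real, norm_inv, norm_norm, inv_mul_cancel₀ hne])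
  refine le_trans (le_of_eq ?_) this
  rw [inner_smul_left, inner_self_eq_norm_sq_to_K, norm_mul]
  simp
  field_simp

lemma continuous_pairing {K : Type v} [NormedAddCommGroup K] [InnerProductSpace ℂ K]
    [CompleteSpace K] (W : K →L[ℂ] K) (hW : IsTraceClass W) :
    @Continuous _ _ (weakStarTopology K) _ (fun Y : K →L[ℂ] K => Tr (W * Y)) := by
  unfold weakStarTopology
  rw [continuous_iff_le_induced]
  refine le_trans (induced_mono (le_of_eq rfl)) ?_
  have h := (continuous_apply (A := fun _ : { X : K →L[ℂ] K // IsTraceClass X } => ℂ)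
    (⟨W, hW⟩ : { X : K →L[ℂ] K // IsTraceClass X }))
  rw [continuous_iff_le_induced] at h
  refine le_trans (induced_mono h) ?_
  rw [induced_compose]
  exact le_of_eq rfl

open scoped ComplexOrder in
lemma core_dilation {H : Type u} {K : Type v}
    [NormedAddCommGroup H] [InnerProductSpace ℂ H] [CompleteSpace H]
    [NormedAddCommGroup K] [InnerProductSpace ℂ K] [CompleteSpace K]
    (Φ : (H →L[ℂ] H) →ₗ[ℂ] (K →L[ℂ] K)) (hΦ : IsChannel Φ) (hSEB : IsSEB Φ)
    {J : Type} (b : HilbertBasis J ℂ H) :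
    IsDilationOf H K (lp (fun _ : ℕ × J => ℂ) 2) Φ := by
  obtain ⟨R, F, hR, hF, hsum, hform⟩ := hSEB
  choose a ha1 ha2 using fun k => (hR k).rep
  choose S hS hSF using fun k => exists_sqrt (hF k)
  -- the scalars `Tr (Y R_k)`
  have hτ : ∀ k (Y : K →L[ℂ] K), HasSum (fun i => ⟪a k i, Y (a k i)⟫) (Tr (Y * R k)) :=
    fun k Y => ((ha2 k).comp_left Y).hasSum_inner
  have hτb : ∀ k (Y : K →L[ℂ] K), ‖Tr (Y * R k)‖ ≤ ‖Y‖ := by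
    intro k Y
    rw [← (hτ k Y).tsum_eq]
    have := (ha1 k).mul_left ‖Y‖
    rw [mul_one] at this
    refine tsum_of_norm_bounded this fun i => ?_
    calc _ ≤ ‖a k i‖ * ‖Y (a k i)‖ := norm_inner_le_norm _ _
      _ ≤ ‖a k i‖ * (‖Y‖ * ‖a k i‖) := by gcongr; exact Y.le_opNorm _
      _ = _ := by ring
  have hτadd : ∀ k (Y Y' : K →L[ℂ] K), Tr ((Y + Y') * R k) = Tr (Y * R k) + Tr (Y' * R k) := by
    intro k Y Y'
    refine (hτ k (Y + Y')).unique ?_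
    simpa [inner_add_right] using (hτ k Y).add (hτ k Y')
  have hτsmul : ∀ k (z : ℂ) (Y : K →L[ℂ] K), Tr ((z • Y) * R k) = z * Tr (Y * R k) := by
    intro k z Y
    refine (hτ k (z • Y)).unique ?_
    simpa [inner_smul_right] using (hτ k Y).mul_left z
  have hτpos : ∀ k (Y : K →L[ℂ] K), Y.IsPositive → 0 ≤ Tr (Y * R k) := by
    intro k Y hY
    rw [← (hτ k Y).tsum_eq]
    exact tsum_nonneg fun i => hY.inner_nonneg_right _
  -- the map `Ψ`
  choose D hD using fun Y : K →L[ℂ] K =>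
    exists_diag (fun p : ℕ × J => Tr (Y * R p.1)) ‖Y‖ (norm_nonneg _) (fun p => hτb p.1 Y)
  let Ψ : (K →L[ℂ] K) →ₗ[ℂ]
      (lp (fun _ : ℕ × J => ℂ) 2 →L[ℂ] lp (fun _ : ℕ × J => ℂ) 2) :=
    { toFun := D
      map_add' := fun Y Y' => by
        ext x p
        simp only [hD, hτadd, add_apply, lp.coeFn_add, Pi.add_apply]
        exact add_mul _ _ _
      map_smul' := fun z Y => by
        ext x p
        simp only [hD, hτsmul, lp.coeFn_smul, Pi.smul_apply, smul_eq_mul, RingHom.id_apply,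
          FunLike.coe_smul, mul_assoc] }
  have hΨ : ∀ Y x p, Ψ Y x p = Tr (Y * R p.1) * x p := hD
  -- the map `Ψ_*`
  let e := lpBasis (ℕ × J)
  let TC : Submodule ℂ (lp (fun _ : ℕ × J => ℂ) 2 →L[ℂ] lp (fun _ : ℕ × J => ℂ) 2) :=
    { carrier := {Z | IsTraceClass Z}
      add_mem' := fun h h' => IsTraceClass.add h h'
      zero_mem' := ⟨0, fun n e f _ _ => by simp⟩
      smul_mem' := fun z _ h => IsTraceClass.smul h z }
  have hz : ∀ Z ∈ TC, Summable fun p => ‖⟪e p, Z (e p)⟫‖ := fun Z hZ =>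
    IsTraceClass.summable hZ e.orthonormal
  have hst := fun Z (hZ : Z ∈ TC) => sum_states (P := ℕ × J) (R := fun p => R p.1)
    (fun p => ha1 p.1) (fun p => ha2 p.1) (hz Z hZ)
  let Ψ0 : TC →ₗ[ℂ] (K →L[ℂ] K) :=
    { toFun := fun Z => ∑' p, ⟪e p, Z.1 (e p)⟫ • R p.1
      map_add' := fun Z Z' => by
        rw [← Summable.tsum_add (hst Z.1 Z.2).1 (hst Z'.1 Z'.2).1]
        refine tsum_congr fun p => ?_
        simp [inner_add_right, add_smul]
      map_smul' := fun z Z => by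
        rw [RingHom.id_apply, ← (hst Z.1 Z.2).1.tsum_const_smul z]
        refine tsum_congr fun p => ?_
        simp [inner_smul_right, smul_smul] }
  obtain ⟨Ψst, hΨst0⟩ := LinearMap.exists_extend Ψ0
  have hΨst : ∀ Z, IsTraceClass Z → Ψst Z = ∑' p, ⟪e p, Z (e p)⟫ • R p.1 := fun Z hZ =>
    LinearMap.congr_fun hΨst0 (⟨Z, hZ⟩ : TC)
  have hstTC : ∀ Z, IsTraceClass Z → IsTraceClass (Ψst Z) := fun Z hZ => by
    rw [hΨst Z hZ]; exact (hst Z hZ).2.isTraceClass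
  have hdual : ∀ Z (Y : K →L[ℂ] K), IsTraceClass Z → Tr (Ψ Y * Z) = Tr (Y * Ψst Z) := by
    intro Z Y hZ
    obtain ⟨ι, a', c', hrep⟩ := hZ.nrep
    have h1 : HasSum (fun p => ⟪e p, (Ψ Y * Z) (e p)⟫) (Tr (Ψ Y * Z)) :=
      (hrep.comp_left (Ψ Y)).hasSum_tr e
    have h2 := ((hst Z hZ).2.comp_left Y).hasSum_inner
    rw [← hΨst Z hZ] at h2
    have h3 : HasSum (fun p => ⟪e p, Z (e p)⟫ * Tr (Y * R p.1)) (Tr (Y * Ψst Z)) :=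
      h2.prod_fiberwise (g := fun p => ⟪e p, Z (e p)⟫ * Tr (Y * R p.1)) (fun p => by
      simpa [inner_smul_right] using (hτ p.1 Y).mul_left ⟪e p, Z (e p)⟫)
    refine h1.unique ?_
    convert h3 using 2 with p
    change ⟪e p, Ψ Y (Z (e p))⟫ = _
    rw [lpBasis_inner, hΨ, lpBasis_inner, mul_comm]
  -- the isometry `U`
  have hSk : ∀ k x (j : J), ⟪S k (b j), x⟫ = ⟪b j, S k x⟫ := fun k x j => by
    rw [← ContinuousLinearMap.adjoint_inner_right, hS]
  have hU2 : ∀ x, HasSum (fun p : ℕ × J => ‖⟪S p.1 (b p.2), x⟫‖ ^ 2) (‖x‖ ^ 2) := by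
    intro x
    have hin : ∀ k, HasSum (fun j => ‖⟪S k (b j), x⟫‖ ^ 2) (‖S k x‖ ^ 2) := fun k => by
      have := lp_norm_sq (b.repr (S k x))
      simpa [b.repr_apply_apply, hSk] using this
    have hout : HasSum (fun k => ‖S k x‖ ^ 2) (‖x‖ ^ 2) := by
      have h1 := (hsum x).mapL (innerSL ℂ x)
      simp only [innerSL_apply_apply, norm_sq_sqrt (hS _) (hSF _)] at h1
      have h2 := ((Complex.hasSum_iff _ _).mp h1).1
      rw [inner_self_eq_norm_sq_to_K] at h2
      have h3 : (((‖x‖ : ℝ) : ℂ) ^ 2).re = ‖x‖ ^ 2 := by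
        rw [← Complex.ofReal_pow, Complex.ofReal_re]
      exact h3 ▸ h2
    have hs : Summable (fun p : ℕ × J => ‖⟪S p.1 (b p.2), x⟫‖ ^ 2) := by
      rw [summable_prod_of_nonneg (fun _ => by positivity)]
      exact ⟨fun k => (hin k).summable, hout.summable.congr fun k => (hin k).tsum_eq.symm⟩
    have := hs.hasSum.prod_fiberwise hin
    rw [hout.unique this]
    exact hs.hasSum
  obtain ⟨U, hU⟩ := exists_lp_op (fun p : ℕ × J => (innerSL ℂ (S p.1 (b p.2)) : H →ₗ[ℂ] ℂ)) 1
    zero_le_one (fun x => (hU2 x).summable) (fun x => by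
      rw [one_mul]; exact (hU2 x).tsum_eq.le)
  have hU' : ∀ x p, U x p = ⟪S p.1 (b p.2), x⟫ := hU
  have hUad : ∀ p, ContinuousLinearMap.adjoint U (e p) = S p.1 (b p.2) := fun p => by
    refine ext_inner_right ℂ fun x => ?_
    rw [ContinuousLinearMap.adjoint_inner_left, lpBasis_inner, hU']
  refine ⟨U, Ψ, Ψst, ?_, ?_, ?_, ?_, hstTC, hdual, ?_⟩
  · intro x
    have h1 := lp_norm_sq (U x)
    simp only [hU'] at h1
    have h2 := h1.unique (hU2 x)
    exact (sq_eq_sq₀ (norm_nonneg _) (norm_nonneg _)).mp h2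
  · intro Y hY
    rw [ContinuousLinearMap.isPositive_iff_complex]
    intro x
    have h0 : 0 ≤ ⟪Ψ Y x, x⟫ := by
      rw [lp.inner_eq_tsum]
      refine tsum_nonneg fun p => ?_
      rw [hΨ]
      have hp := hτpos p.1 Y hY
      have hconj : star (Tr (Y * R p.1)) = Tr (Y * R p.1) := (IsSelfAdjoint.of_nonneg hp)
      have : ⟪Tr (Y * R p.1) * (x p : ℂ), (x p : ℂ)⟫ = Tr (Y * R p.1) * (star (x p : ℂ) * x p) := by
        rw [RCLike.inner_apply, map_mul]
        change _ * (star (Tr (Y * R p.1)) * star (x p : ℂ)) = _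
        rw [hconj]; ring
      rw [this]
      exact mul_nonneg hp (star_mul_self_nonneg _)
    rw [Complex.nonneg_iff] at h0
    refine ⟨?_, h0.1⟩
    apply Complex.ext
    · rfl
    · exact h0.2
  · refine continuous_induced_rng.2 ?_
    refine @continuous_pi _ _ _ (weakStarTopology K) _ _ fun Z => ?_
    have hZ := Z.2
    have heq : ∀ Y, Tr ((Z : _ →L[ℂ] _) * Ψ Y) = Tr (Ψst Z * Y) := by
      intro Y
      obtain ⟨ι, a', c', hrep⟩ := hZ.nrep
      obtain ⟨ι', a'', c'', hrep'⟩ := (hstTC _ hZ).nrep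
      rw [← hrep.tr_comm, hdual _ _ hZ, hrep'.tr_comm]
    have hc := continuous_pairing (Ψst Z) (hstTC _ hZ)
    have hfun : (fun Y => Tr ((Z : _ →L[ℂ] _) * Ψ Y)) = fun Y => Tr (Ψst Z * Y) := funext heq
    rw [← hfun] at hc
    exact hc
  · intro Y₁ Y₂
    ext x p
    change Ψ Y₁ (Ψ Y₂ x) p = Ψ Y₂ (Ψ Y₁ x) p
    rw [hΨ, hΨ, hΨ, hΨ]
    ring
  · intro X hX
    obtain ⟨ι, a', c', hrep⟩ := hX.nrep
    have hZ : IsTraceClass (U ∘L X ∘L ContinuousLinearMap.adjoint U) :=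
      ((hrep.comp_right (ContinuousLinearMap.adjoint U)).comp_left U).isTraceClass
    rw [hΨst _ hZ]
    have h1 := (hst _ hZ).1.hasSum
    have hblock : ∀ k, HasSum (fun j => ⟪e (k, j),
        (U ∘L X ∘L ContinuousLinearMap.adjoint U) (e (k, j))⟫) (Tr (F k * X)) := by
      intro k
      have h2 := ((hrep.comp_right (S k)).comp_left (S k)).hasSum_tr b
      have h3 : Tr (S k ∘L (X ∘L S k)) = Tr (F k * X) := by
        have h4 := (hrep.comp_right (S k)).tr_comm (S k)
        have h5 := hrep.tr_comm (F k)
        rw [h5]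
        refine h4.trans ?_
        congr 1
        ext x
        change X (S k (S k x)) = X (F k x)
        rw [hSF]
      rw [h3] at h2
      convert h2 using 2 with j
      change ⟪e (k, j), U (X (ContinuousLinearMap.adjoint U (e (k, j))))⟫ = ⟪b j, S k (X (S k (b j)))⟫
      rw [← ContinuousLinearMap.adjoint_inner_left, hUad, hSk]
    have h2 := h1.prod_fiberwise (g := fun k => Tr (F k * X) • R k)
      (fun k => (hblock k).smul_const (R k))
    refine HasSum.unique (f := fun k => Tr (F k * X) • R k) ?_ h2
    have h3 : Filter.Tendsto (fun s : Finset ℕ =>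
        traceNorm (Φ X - ∑ k ∈ s, Tr (F k * X) • R k)) Filter.atTop (nhds 0) := hform X hX
    have hfin : ∀ s : Finset ℕ, IsTraceClass (∑ k ∈ s, Tr (F k * X) • R k) := by
      intro s
      induction s using Finset.cons_induction with
      | empty => exact ⟨0, fun n e f _ _ => by simp⟩
      | cons k s hk ih =>
        rw [Finset.sum_cons]
        exact ((hR k).1.smul _).add ih
    rw [HasSum, SummationFilter.unconditional_filter, tendsto_iff_norm_sub_tendsto_zero]
    refine squeeze_zero (fun _ => norm_nonneg _) (fun s => ?_) h3
    rw [norm_sub_rev]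
    refine norm_le_traceNorm ?_
    have := (hΦ.maps_traceClass X hX).add ((hfin s).smul (-1))
    rwa [neg_one_smul, ← sub_eq_add_neg] at this

end Helpers

/-- Every strongly entanglement breaking channel dilates to the
predual of a weak*-weak* continuous positive map with commutative range. -/
theorem SEB_dilates_to_predual_of_commutative_range_map
    {H K : Type*} [NormedAddCommGroup H] [InnerProductSpace ℂ H] [CompleteSpace H]
    [TopologicalSpace.SeparableSpace H]
    [NormedAddCommGroup K] [InnerProductSpace ℂ K] [CompleteSpace K]
    [TopologicalSpace.SeparableSpace K]
    (Φ : (H →L[ℂ] H) →ₗ[ℂ] (K →L[ℂ] K)) (hΦ : IsChannel Φ) (hSEB : IsSEB Φ) :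
    ∃ (E : Type) (i₁ : NormedAddCommGroup E) (i₂ : @InnerProductSpace ℂ E _ i₁.toSeminormedAddCommGroup)
      (i₃ : @CompleteSpace E i₁.toMetricSpace.toPseudoMetricSpace.toUniformSpace),
      @IsDilationOf H K E _ _ _ _ _ _ i₁ i₂ i₃ Φ := by
  obtain ⟨J, ⟨b⟩⟩ := exists_small_basis H
  exact ⟨_, _, _, _, core_dilation Φ hΦ hSEB b⟩

end
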